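/- Let D be a bounded simply connected domain in ℂ and φ a conformal map of the open unit disk 𝔻 onto D. If the boundary of D is locally connected, then φ extends to a continuous map from the closed unit disk onto the closure of D. -/

import Mathlib

open Metric

/-!
Send a boundary point of the disc to the end `-∞` of a horizontal strip. Since the image has finite
area, the length–area argument yields, arbitrarily far to the left, a vertical cross-section whose
image is short and has both ends on `∂D`. By local connectivity a small continuum in `∂D` joins the
ends. Janiszewski's theorem, here in Eilenberg's form via logarithms of `(z - w₁) / (z - w₀)`, then
confines the piece of `D` that is cut off to a small disc, so `φ` is Cauchy at the boundary point.
-/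

open Set Filter Topology MeasureTheory
open scoped ENNReal NNReal

/-! ### Separation of the plane -/

/-- `HasLogRatio K w₀ w₁` says that `(z - w₁) / (z - w₀)` has a continuous logarithm on `K`.
By Eilenberg's criterion this means, for compact `K`, that `K` does not separate `w₀` from `w₁`.
Since `exp` has no zeros and `x / 0 = 0`, it forces `w₀` and `w₁` to lie outside `K`. -/
def HasLogRatio (K : Set ℂ) (w₀ w₁ : ℂ) : Prop :=
  ∃ g : ℂ → ℂ, ContinuousOn g K ∧ ∀ z ∈ K, Complex.exp (g z) = (z - w₁) / (z - w₀)

section LogRatio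

variable {K A B W : Set ℂ} {w₀ w₁ w₂ : ℂ}

lemma HasLogRatio.mono (h : HasLogRatio B w₀ w₁) (hAB : A ⊆ B) : HasLogRatio A w₀ w₁ := by
  obtain ⟨g, hg, hexp⟩ := h
  exact ⟨g, hg.mono hAB, fun z hz => hexp z (hAB hz)⟩

lemma HasLogRatio.left_notMem (h : HasLogRatio K w₀ w₁) : w₀ ∉ K := by
  obtain ⟨g, -, hexp⟩ := h
  exact fun hw => Complex.exp_ne_zero (g w₀) (by simpa using hexp w₀ hw)

lemma HasLogRatio.symm (h : HasLogRatio K w₀ w₁) : HasLogRatio K w₁ w₀ := by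
  obtain ⟨g, hg, hexp⟩ := h
  exact ⟨-g, hg.neg, fun z hz => by rw [Pi.neg_apply, Complex.exp_neg, hexp z hz, inv_div]⟩

lemma HasLogRatio.trans (h : HasLogRatio K w₀ w₁) (h' : HasLogRatio K w₁ w₂) :
    HasLogRatio K w₀ w₂ := by
  have hw₁ := h'.left_notMem
  obtain ⟨g, hg, hexp⟩ := h
  obtain ⟨g', hg', hexp'⟩ := h'
  refine ⟨g + g', hg.add hg', fun z hz => ?_⟩
  have hz₁ : z - w₁ ≠ 0 := sub_ne_zero.2 (ne_of_mem_of_not_mem hz hw₁)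
  rw [Pi.add_apply, Complex.exp_add, hexp z hz, hexp' z hz, mul_comm, div_mul_div_cancel₀ hz₁]

lemma eventually_hasLogRatio (hK : IsClosed K) (hw : w₀ ∉ K) :
    ∀ᶠ w in 𝓝 w₀, HasLogRatio K w₀ w := by
  obtain ⟨ε, hε, hball⟩ := Metric.isOpen_iff.1 hK.isOpen_compl w₀ hw
  filter_upwards [ball_mem_nhds w₀ hε] with w hwε
  have hne : ∀ z ∈ K, z - w₀ ≠ 0 := fun z hz => sub_ne_zero.2 (ne_of_mem_of_not_mem hz hw)
  have hslit : ∀ z ∈ K, (z - w) / (z - w₀) ∈ Complex.slitPlane := by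
    intro z hz
    have hsplit : (z - w) / (z - w₀) = 1 + (w₀ - w) / (z - w₀) := by
      rw [one_add_div (hne z hz), sub_add_sub_cancel]
    have hdist : dist w₀ w < dist z w₀ := by
      rw [dist_comm]
      exact (mem_ball.1 hwε).trans_le (not_lt.1 fun hlt => hball (mem_ball.2 hlt) hz)
    rw [hsplit]
    apply Complex.mem_slitPlane_of_norm_lt_one
    rwa [norm_div, div_lt_one (norm_pos_iff.2 (hne z hz)), ← dist_eq_norm, ← dist_eq_norm]
  exact ⟨fun z => Complex.log ((z - w) / (z - w₀)),
    .clog (.div (by fun_prop) (by fun_prop) hne) hslit,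
    fun z hz => Complex.exp_log (Complex.slitPlane_ne_zero (hslit z hz))⟩

lemma hasLogRatio_of_isPreconnected {D : Set ℂ} (hK : IsClosed K) (hD : IsPreconnected D)
    (hDK : Disjoint D K) (h₀ : w₀ ∈ D) (h₁ : w₁ ∈ D) : HasLogRatio K w₀ w₁ :=
  hD.induction₂ (HasLogRatio K)
    (fun _ hw => nhdsWithin_le_nhds (eventually_hasLogRatio hK (hDK.notMem_of_mem_left hw)))
    (fun _ _ _ _ _ _ => HasLogRatio.trans) (fun _ _ _ _ => HasLogRatio.symm) h₀ h₁

lemma sub_eq_sub_of_exp_eqOn {X : Type*} [TopologicalSpace X] {S : Set X} {f g : X → ℂ}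
    (hS : IsPreconnected S) (hf : ContinuousOn f S) (hg : ContinuousOn g S)
    (hfg : ∀ x ∈ S, Complex.exp (f x) = Complex.exp (g x)) {x y : X} (hx : x ∈ S) (hy : y ∈ S) :
    f x - g x = f y - g y :=
  Complex.isCoveringMap_exp.constOn_of_comp hS (hf.sub hg) (fun a ha b hb => by
    simp [Complex.exp_sub, hfg a ha, hfg b hb]) hx hy

/-- Janiszewski's theorem. The two logarithms differ by a constant on the connected set `A ∩ B`,
so after a shift they glue. -/
theorem HasLogRatio.union (hA : IsClosed A) (hB : IsClosed B) (hAB : IsPreconnected (A ∩ B))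
    (h : HasLogRatio A w₀ w₁) (h' : HasLogRatio B w₀ w₁) : HasLogRatio (A ∪ B) w₀ w₁ := by
  classical
  obtain ⟨f, hf, hfexp⟩ := h
  obtain ⟨g, hg, hgexp⟩ := h'
  have hfg : ∀ z ∈ A ∩ B, Complex.exp (f z) = Complex.exp (g z) := fun z hz =>
    (hfexp z hz.1).trans (hgexp z hz.2).symm
  obtain ⟨c, hc, hc_exp⟩ : ∃ c, (∀ z ∈ A ∩ B, f z = g z + c) ∧ Complex.exp c = 1 := by
    rcases (A ∩ B).eq_empty_or_nonempty with hempty | ⟨a, ha⟩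
    · exact ⟨0, by simp [hempty], Complex.exp_zero⟩
    · refine ⟨f a - g a, fun z hz => ?_, ?_⟩
      · rw [← sub_eq_sub_of_exp_eqOn hAB (hf.mono inter_subset_left) (hg.mono inter_subset_right)
          hfg hz ha, add_sub_cancel]
      · rw [Complex.exp_sub, hfg a ha, div_self (Complex.exp_ne_zero _)]
  let F : ℂ → ℂ := A.piecewise f fun z => g z + c
  have hFA : EqOn F f A := piecewise_eqOn _ _ _
  have hFB : EqOn F (fun z => g z + c) B := fun z hz => by
    by_cases hzA : z ∈ A
    · exact (hFA hzA).trans (hc z ⟨hzA, hz⟩)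
    · exact piecewise_eq_of_notMem _ _ _ hzA
  refine ⟨F, (hf.congr hFA).union_of_isClosed ((hg.add continuousOn_const).congr hFB) hA hB, ?_⟩
  rintro z (hz | hz)
  · rw [hFA hz, hfexp z hz]
  · rw [hFB hz, Complex.exp_add, hc_exp, mul_one, hgexp z hz]

lemma not_exists_continuousOn_sphere_exp_eq_sub (w : ℂ) {r : ℝ} (hr : 0 < r) :
    ¬ ∃ g : ℂ → ℂ, ContinuousOn g (sphere w r) ∧ ∀ z ∈ sphere w r, Complex.exp (g z) = z - w := by
  rintro ⟨g, hg, hexp⟩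
  have hmem (t : ℝ) : circleMap w r t ∈ sphere w r := circleMap_mem_sphere w hr.le t
  have hexp' (t : ℝ) :
      Complex.exp (g (circleMap w r t)) = Complex.exp (Real.log r + t * Complex.I) := by
    rw [hexp _ (hmem t), circleMap_sub_center, circleMap_zero, Complex.exp_add,
      ← Complex.ofReal_exp, Real.exp_log hr]
  have hturn := sub_eq_sub_of_exp_eqOn isPreconnected_univ
    (hg.comp_continuous (continuous_circleMap w r) hmem).continuousOn
    (by fun_prop : ContinuousOn (fun t : ℝ => (Real.log r + t * Complex.I : ℂ)) univ)
    (fun t _ => hexp' t) (mem_univ 0) (mem_univ (2 * Real.pi))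
  have hperiod : circleMap w r (2 * Real.pi) = circleMap w r 0 := by
    simpa using periodic_circleMap w r 0
  simp [hperiod, Real.pi_ne_zero] at hturn

lemma exists_continuous_exp_eq {F : ℂ → ℂ} (hF : Continuous F) (hF₀ : ∀ z, F z ≠ 0) :
    ∃ g : ℂ → ℂ, Continuous g ∧ ∀ z, Complex.exp (g z) = F z := by
  have : ContractibleSpace (univ : Set ℂ) := convex_univ.contractibleSpace univ_nonempty
  have hsc : IsSimplyConnected (univ : Set ℂ) := inferInstanceAs (SimplyConnectedSpace _)
  obtain ⟨g, hg, hexp⟩ := Complex.exists_continuousOn_eqOn_exp_comp hsc isOpen_univ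
    hF.continuousOn (by rintro ⟨z, -, hz⟩; exact hF₀ z hz)
  exact ⟨g, continuousOn_univ.1 hg, fun z => hexp (mem_univ z)⟩

/-- If `w₀ ∉ W`, then replacing `z - w₁` on `W` by `exp (g z) * (z - w₀)`, with `g` a Tietze
extension of the logarithm, gives a zero-free function on the plane that equals `z - w₁` near
infinity; it would have a logarithm, although `z - w₁` has none on large circles. -/
theorem HasLogRatio.mem_of_frontier_subset (h : HasLogRatio K w₀ w₁) (hK : IsClosed K)
    (hW : Bornology.IsBounded W) (hWK : frontier W ⊆ K) (h₁ : w₁ ∈ W) : w₀ ∈ W := by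
  classical
  by_contra h₀
  have hw₀ := h.left_notMem
  obtain ⟨g, hg, hexp⟩ := h
  obtain ⟨G, hG⟩ := ContinuousMap.exists_restrict_eq hK
    ⟨K.domRestrict g, continuousOn_iff_continuous_domRestrict.1 hg⟩
  have hGg : ∀ z ∈ K, G z = g z := fun z hz => congrArg (fun f => f ⟨z, hz⟩) hG
  let F : ℂ → ℂ := W.piecewise (fun z => Complex.exp (G z) * (z - w₀)) (fun z => z - w₁)
  have hF_on : ∀ z ∈ W, F z = Complex.exp (G z) * (z - w₀) := piecewise_eqOn _ _ _
  have hF_off : ∀ z ∉ W, F z = z - w₁ := piecewise_eqOn_compl _ _ _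
  have hF_cont : Continuous F := by
    refine continuous_piecewise (fun z hz => ?_) (by fun_prop) (by fun_prop)
    have hne : z - w₀ ≠ 0 := sub_ne_zero.2 (ne_of_mem_of_not_mem (hWK hz) hw₀)
    rw [hGg z (hWK hz), hexp z (hWK hz), div_mul_cancel₀ _ hne]
  have hF_ne : ∀ z, F z ≠ 0 := by
    intro z
    by_cases hz : z ∈ W
    · rw [hF_on z hz]
      exact mul_ne_zero (Complex.exp_ne_zero _) (sub_ne_zero.2 (ne_of_mem_of_not_mem hz h₀))
    · rw [hF_off z hz]
      exact sub_ne_zero.2 (ne_of_mem_of_not_mem h₁ hz).symm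
  obtain ⟨k, hk, hk_exp⟩ := exists_continuous_exp_eq hF_cont hF_ne
  obtain ⟨R, hR, hWR⟩ := hW.subset_ball_lt 0 w₁
  refine not_exists_continuousOn_sphere_exp_eq_sub w₁ hR ⟨k, hk.continuousOn, fun z hz => ?_⟩
  rw [hk_exp, hF_off z fun hzW => (mem_ball.1 (hWR hzW)).ne hz]

lemma isPreconnected_compl_closedBall {E : Type*} [NormedAddCommGroup E] [NormedSpace ℝ E]
    (hE : 1 < Module.rank ℝ E) (c : E) (r : ℝ) : IsPreconnected (closedBall c r)ᶜ := by
  rcases lt_or_ge r 0 with hr | hr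
  · rw [closedBall_eq_empty.2 hr, compl_empty]
    exact isPreconnected_univ
  have himage : (closedBall c r)ᶜ = (fun p : ℝ × E => c + p.1 • p.2) '' (Ioi r ×ˢ sphere 0 1) := by
    ext x
    simp only [mem_compl_iff, mem_closedBall, not_le, mem_image, mem_prod, mem_Ioi,
      mem_sphere_zero_iff_norm, Prod.exists]
    constructor
    · intro hx
      have hpos := hr.trans_lt hx
      refine ⟨dist x c, (dist x c)⁻¹ • (x - c), ⟨hx, ?_⟩, ?_⟩
      · rw [norm_smul, norm_inv, Real.norm_of_nonneg hpos.le, ← dist_eq_norm,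
          inv_mul_cancel₀ hpos.ne']
      · rw [smul_inv_smul₀ hpos.ne', add_sub_cancel]
    · rintro ⟨t, v, ⟨ht, hv⟩, rfl⟩
      rwa [dist_eq_norm, add_sub_cancel_left, norm_smul, hv, mul_one,
        Real.norm_of_nonneg (hr.trans ht.le)]
  rw [himage]
  exact (isPreconnected_Ioi.prod (isPreconnected_sphere hE 0 1)).image _ (by fun_prop)

end LogRatio

/-- A point `w₁ ∈ W` outside the disc is separated from `w₀` neither by `frontier D`, as both lie in
`D`, nor by `Q ∪ L`, which lies in the disc. These two sets meet in the connected set `L`, so by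
Janiszewski's theorem their union, which contains `frontier W`, does not separate them either. -/
theorem subset_closedBall_of_frontier_subset_union {D W Q L : Set ℂ} {w₀ c : ℂ} {r : ℝ}
    (hD : IsOpen D) (hDc : IsPreconnected D) (hWD : W ⊆ D) (hW : Bornology.IsBounded W)
    (hWQ : frontier W ⊆ frontier D ∪ Q) (hQ : IsClosed Q) (hL : IsClosed L)
    (hLc : IsPreconnected L) (hLD : L ⊆ frontier D) (hQL : frontier D ∩ Q ⊆ L)
    (hQr : Q ⊆ closedBall c r) (hLr : L ⊆ closedBall c r) (h₀ : w₀ ∈ D) (h₀W : w₀ ∉ W)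
    (h₀r : w₀ ∉ closedBall c r) : W ⊆ closedBall c r := by
  intro w₁ h₁
  by_contra h₁r
  have hfrontier : HasLogRatio (frontier D) w₀ w₁ :=
    hasLogRatio_of_isPreconnected isClosed_frontier hDc
      (disjoint_frontier_iff_isOpen.2 hD).symm h₀ (hWD h₁)
  have hdisc : HasLogRatio (closedBall c r) w₀ w₁ :=
    hasLogRatio_of_isPreconnected isClosed_closedBall
      (isPreconnected_compl_closedBall (by simp) c r) disjoint_compl_left h₀r h₁r
  have hinter : frontier D ∩ (Q ∪ L) = L := by
    rw [inter_union_distrib_left, inter_eq_self_of_subset_right hLD]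
    exact union_eq_self_of_subset_left hQL
  have hunion : HasLogRatio (frontier D ∪ (Q ∪ L)) w₀ w₁ :=
    hfrontier.union isClosed_frontier (hQ.union hL) (by rwa [hinter])
      (hdisc.mono (union_subset hQr hLr))
  exact h₀W (hunion.mem_of_frontier_subset (isClosed_frontier.union (hQ.union hL)) hW
    (hWQ.trans (union_subset_union_right _ subset_union_left)) h₁)

/-! ### Uniform local connectedness -/

lemma exists_isPreconnected_subset_closedBall {X : Type*} [PseudoMetricSpace X] [CompactSpace X]
    [LocallyConnectedSpace X] {ε : ℝ} (hε : 0 < ε) :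
    ∃ δ > 0, ∀ a b : X, dist a b < δ →
      ∃ L, IsClosed L ∧ IsPreconnected L ∧ a ∈ L ∧ b ∈ L ∧ L ⊆ closedBall a ε := by
  let C (x : X) : Set X := connectedComponentIn (ball x (ε / 2)) x
  have hC_mem (x : X) : x ∈ C x := mem_connectedComponentIn (mem_ball_self (half_pos hε))
  obtain ⟨δ, hδ, hlebesgue⟩ := lebesgue_number_lemma_of_metric (c := C) isCompact_univ
    (fun x => isOpen_ball.connectedComponentIn) fun x _ => mem_iUnion_of_mem x (hC_mem x)
  refine ⟨δ, hδ, fun a b hab => ?_⟩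
  obtain ⟨x, hx⟩ := hlebesgue a (mem_univ a)
  have ha : a ∈ C x := hx (mem_ball_self hδ)
  have hb : b ∈ C x := hx (mem_ball'.2 hab)
  refine ⟨closure (C x), isClosed_closure, isPreconnected_connectedComponentIn.closure,
    subset_closure ha, subset_closure hb,
    closure_minimal (fun y hy => mem_closedBall.2 ?_) isClosed_closedBall⟩
  calc dist y a ≤ dist y x + dist a x := dist_triangle_right y a x
    _ ≤ ε / 2 + ε / 2 :=
      add_le_add (connectedComponentIn_subset _ _ hy).le (connectedComponentIn_subset _ _ ha).le
    _ = ε := add_halves ε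

lemma exists_isPreconnected_subset_of_isCompact {X : Type*} [MetricSpace X] {K : Set X}
    (hK : IsCompact K) [LocallyConnectedSpace K] {ε : ℝ} (hε : 0 < ε) :
    ∃ δ > 0, ∀ a ∈ K, ∀ b ∈ K, dist a b < δ →
      ∃ L ⊆ K, IsClosed L ∧ IsPreconnected L ∧ a ∈ L ∧ b ∈ L ∧ L ⊆ closedBall a ε := by
  have : CompactSpace K := isCompact_iff_compactSpace.1 hK
  obtain ⟨δ, hδ, hjoin⟩ := exists_isPreconnected_subset_closedBall (X := K) hε
  refine ⟨δ, hδ, fun a ha b hb hab => ?_⟩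
  obtain ⟨L, hL, hLc, haL, hbL, hLε⟩ := hjoin ⟨a, ha⟩ ⟨b, hb⟩ hab
  exact ⟨Subtype.val '' L, Subtype.coe_image_subset K L,
    hK.isClosed.isClosedEmbedding_subtypeVal.isClosedMap L hL,
    hLc.image _ continuous_subtype_val.continuousOn, mem_image_of_mem _ haL,
    mem_image_of_mem _ hbL, image_subset_iff.2 hLε⟩

/-! ### Boundary behaviour of open injective maps -/

section OpenInjective

variable {X Y : Type*} [TopologicalSpace X] [TopologicalSpace Y] {f : X → Y} {Ω V : Set X}
  {l : Filter X} {p u : X} {y : Y}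

lemma le_nhds_of_tendsto_of_injOn (hΩ : IsOpen Ω)
    (hopen : ∀ U ⊆ Ω, IsOpen U → IsOpen (f '' U)) (hinj : InjOn f Ω) (hl : l ≤ 𝓟 Ω) (hu : u ∈ Ω)
    (h : Tendsto f l (𝓝 (f u))) : l ≤ 𝓝 u := by
  intro V hV
  obtain ⟨U, hUV, hU, huU⟩ := mem_nhds_iff.1 hV
  have himage : f '' (U ∩ Ω) ∈ 𝓝 (f u) :=
    (hopen _ inter_subset_right (hU.inter hΩ)).mem_nhds (mem_image_of_mem f ⟨huU, hu⟩)
  filter_upwards [h himage, le_principal_iff.1 hl] with x ⟨x', hx', hxx'⟩ hx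
  exact hUV (hinj hx'.2 hx hxx' ▸ hx'.1)

lemma mem_frontier_image_of_tendsto [T2Space X] [l.NeBot] (hΩ : IsOpen Ω)
    (hopen : ∀ U ⊆ Ω, IsOpen U → IsOpen (f '' U)) (hinj : InjOn f Ω) (hl : l ≤ 𝓟 Ω)
    (hlp : l ≤ 𝓝 p) (hp : p ∉ Ω) (h : Tendsto f l (𝓝 y)) : y ∈ frontier (f '' Ω) := by
  rw [(hopen Ω subset_rfl hΩ).frontier_eq]
  refine ⟨mem_closure_of_tendsto h ?_, ?_⟩
  · filter_upwards [le_principal_iff.1 hl] with x hx using mem_image_of_mem f hx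
  · rintro ⟨u, hu, rfl⟩
    have hlu := le_nhds_of_tendsto_of_injOn hΩ hopen hinj hl hu h
    exact hp (tendsto_nhds_unique (f := id) hlu hlp ▸ hu)

lemma mem_closure_of_mem_closure_image (hΩ : IsOpen Ω)
    (hopen : ∀ U ⊆ Ω, IsOpen U → IsOpen (f '' U)) (hinj : InjOn f Ω) (hVΩ : V ⊆ Ω) (hu : u ∈ Ω)
    (h : f u ∈ closure (f '' V)) : u ∈ closure V := by
  have hne : (𝓟 V ⊓ comap f (𝓝 (f u))).NeBot := by
    rw [← map_neBot_iff f, Filter.push_pull, map_principal, inf_comm]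
    exact mem_closure_iff_clusterPt.1 h
  have hle : 𝓟 V ⊓ comap f (𝓝 (f u)) ≤ 𝓝 u :=
    le_nhds_of_tendsto_of_injOn hΩ hopen hinj (inf_le_left.trans (principal_mono.2 hVΩ)) hu
      (tendsto_comap.mono_left inf_le_right)
  exact mem_closure_iff_clusterPt.2 (hne.mono (le_inf hle inf_le_left))

lemma frontier_image_inter_subset (hΩ : IsOpen Ω) (hopen : ∀ U ⊆ Ω, IsOpen U → IsOpen (f '' U))
    (hinj : InjOn f Ω) (hV : IsOpen V) :
    frontier (f '' (Ω ∩ V)) ⊆ frontier (f '' Ω) ∪ f '' (Ω ∩ frontier V) := by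
  rw [(hopen _ inter_subset_left (hΩ.inter hV)).frontier_eq, (hopen _ subset_rfl hΩ).frontier_eq,
    hV.frontier_eq]
  rintro y ⟨hy, hyV⟩
  by_cases hyΩ : y ∈ f '' Ω
  · obtain ⟨u, hu, rfl⟩ := hyΩ
    have hu_closure : u ∈ closure (Ω ∩ V) :=
      mem_closure_of_mem_closure_image hΩ hopen hinj inter_subset_left hu hy
    exact .inr (mem_image_of_mem f ⟨hu, closure_mono inter_subset_right hu_closure,
      fun huV => hyV (mem_image_of_mem f ⟨hu, huV⟩)⟩)
  · exact .inl ⟨closure_mono (image_mono inter_subset_left) hy, hyΩ⟩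

end OpenInjective

lemma isOpen_image_of_differentiableOn_of_injOn {f : ℂ → ℂ} {Ω : Set ℂ}
    (hf : DifferentiableOn ℂ f Ω) (hΩ : IsOpen Ω) (hΩc : IsPreconnected Ω) (hΩnt : Ω.Nontrivial)
    (hinj : InjOn f Ω) :
    ∀ U ⊆ Ω, IsOpen U → IsOpen (f '' U) := by
  obtain ⟨x, hx, y, hy, hxy⟩ := hΩnt
  rcases (hf.analyticOnNhd hΩ).is_constant_or_isOpen hΩc with ⟨w, hw⟩ | hopen
  · exact absurd (hinj hx hy ((hw x hx).trans (hw y hy).symm)) hxy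
  · exact hopen

/-! ### Extension by limits -/

lemma exists_continuousOn_closure_eqOn {X Y : Type*} [TopologicalSpace X]
    [TopologicalSpace Y] [T3Space Y] {f : X → Y} {s : Set X} (hs : IsCompact (closure s))
    (hf : ContinuousOn f s) (hlim : ∀ x ∈ closure s, ∃ y, Tendsto f (𝓝[s] x) (𝓝 y)) :
    ∃ g : X → Y, ContinuousOn g (closure s) ∧ EqOn g f s ∧ g '' closure s = closure (f '' s) := by
  have hg : ContinuousOn (extendFrom s f) (closure s) := continuousOn_extendFrom subset_rfl hlim
  have hgf : EqOn (extendFrom s f) f s := fun x hx =>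
    extendFrom_eq (subset_closure hx) (hf x hx)
  exact ⟨_, hg, hgf, by rw [image_closure_of_isCompact hs hg, hgf.image_eq]⟩

lemma exists_tendsto_of_uniformContinuousOn {X Y : Type*} [UniformSpace X] [UniformSpace Y]
    [CompleteSpace Y] {f : X → Y} {s : Set X} (hf : UniformContinuousOn f s) :
    ∀ x ∈ closure s, ∃ y, Tendsto f (𝓝[s] x) (𝓝 y) := by
  intro x hx
  have := mem_closure_iff_nhdsWithin_neBot.1 hx
  have hcauchy : Cauchy (𝓝[s] x) := cauchy_nhds.mono nhdsWithin_le_nhds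
  exact cauchy_map_iff_exists_tendsto.1 (hcauchy.map_of_le hf inf_le_right)

/-! ### The length–area method -/

lemma enorm_det_restrictScalars_fderiv (f : ℂ → ℂ) (u : ℂ) :
    ENNReal.ofReal |((fderiv ℂ f u).restrictScalars ℝ).det| = ‖deriv f u‖ₑ ^ 2 := by
  have hdet : ((fderiv ℂ f u).restrictScalars ℝ).det = ‖deriv f u‖ ^ 2 := by
    simp [ContinuousLinearMap.det, LinearMap.det_restrictScalars, Algebra.norm_complex_apply,
      Complex.normSq_eq_norm_sq]
  rw [hdet, abs_of_nonneg (sq_nonneg _), ENNReal.ofReal_pow (norm_nonneg _), ofReal_norm]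

lemma setLIntegral_enorm_deriv_sq_eq_volume_image {f : ℂ → ℂ} {s : Set ℂ} (hs : IsOpen s)
    (hf : DifferentiableOn ℂ f s) (hinj : InjOn f s) :
    ∫⁻ u in s, ‖deriv f u‖ₑ ^ 2 = volume (f '' s) := by
  have hf' : ∀ u ∈ s, HasFDerivWithinAt f ((fderiv ℂ f u).restrictScalars ℝ) s u := fun u hu =>
    ((hf.differentiableAt (hs.mem_nhds hu)).hasFDerivAt.restrictScalars ℝ).hasFDerivWithinAt
  rw [← lintegral_abs_det_fderiv_eq_addHaar_image volume hs.measurableSet hf' hinj]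
  simp only [enorm_det_restrictScalars_fderiv]

lemma setLIntegral_im_preimage {F : ℂ → ℝ≥0∞} (hF : Measurable F) {I : Set ℝ}
    (hI : MeasurableSet I) :
    ∫⁻ u in Complex.im ⁻¹' I, F u = ∫⁻ s, ∫⁻ t in I, F ⟨s, t⟩ := by
  have he := Complex.volume_preserving_equiv_real_prod.symm
  rw [← he.setLIntegral_comp_preimage (Complex.measurable_im hI) hF]
  have hpre : Complex.measurableEquivRealProd.symm ⁻¹' (Complex.im ⁻¹' I) = univ ×ˢ I := by
    ext; simp
  rw [hpre, Measure.volume_eq_prod,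
    setLIntegral_prod (fun p => F (Complex.measurableEquivRealProd.symm p))
      (hF.comp he.measurable).aemeasurable, setLIntegral_univ]
  rfl

lemma exists_lt_setLIntegral_slice_lt {F : ℂ → ℝ≥0∞} (hF : Measurable F) {I : Set ℝ}
    (hI : MeasurableSet I) (hfin : ∫⁻ u in Complex.im ⁻¹' I, F u ≠ ∞) {δ : ℝ≥0∞} (hδ : δ ≠ 0)
    (M : ℝ) : ∃ s < M, ∫⁻ t in I, F ⟨s, t⟩ < δ := by
  by_contra! hlarge
  refine hfin (top_unique ?_)
  calc ∞ = ∫⁻ _ in Iio M, δ := by simp [hδ]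
    _ ≤ ∫⁻ s in Iio M, ∫⁻ t in I, F ⟨s, t⟩ := setLIntegral_mono' measurableSet_Iio hlarge
    _ ≤ ∫⁻ s, ∫⁻ t in I, F ⟨s, t⟩ := setLIntegral_le_lintegral _ _
    _ = ∫⁻ u in Complex.im ⁻¹' I, F u := (setLIntegral_im_preimage hF hI).symm

lemma lintegral_le_sqrt_lintegral_sq_mul {X : Type*} [MeasurableSpace X] (μ : Measure X)
    {F : X → ℝ≥0∞} (hF : AEMeasurable F μ) :
    ∫⁻ x, F x ∂μ ≤ (∫⁻ x, F x ^ 2 ∂μ) ^ (1 / 2 : ℝ) * μ univ ^ (1 / 2 : ℝ) := by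
  simpa using ENNReal.lintegral_mul_le_Lp_mul_Lq μ .two_two hF (aemeasurable_const (b := 1))

lemma holderOnWith_of_setLIntegral_enorm_deriv_sq_le {E : Type*} [NormedAddCommGroup E]
    [NormedSpace ℝ E] [CompleteSpace E] {g g' : ℝ → E} {I : Set ℝ} (hI : I.OrdConnected)
    (hg : ∀ t ∈ I, HasDerivAt g (g' t) t) (hg' : ContinuousOn g' I) {C : ℝ≥0}
    (hC : ∫⁻ t in I, ‖g' t‖ₑ ^ 2 ≤ C ^ 2) : HolderOnWith C (1 / 2) g I := by
  intro a ha b hb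
  wlog hab : a ≤ b generalizing a ha b hb
  · rw [edist_comm, edist_comm a]
    exact this b hb a ha (le_of_not_ge hab)
  have hsub : Icc a b ⊆ I := hI.out ha hb
  have hsub' : Ioc a b ⊆ I := Ioc_subset_Icc_self.trans hsub
  have hint : IntervalIntegrable g' volume a b :=
    (hg'.mono (uIcc_of_le hab ▸ hsub)).intervalIntegrable
  have hftc : ∫ t in Ioc a b, g' t = g b - g a := by
    rw [← intervalIntegral.integral_of_le hab]
    exact intervalIntegral.integral_eq_sub_of_hasDerivAt
      (fun t ht => hg t (hsub (uIcc_of_le hab ▸ ht))) hint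
  calc edist (g a) (g b) = ‖∫ t in Ioc a b, g' t‖ₑ := by
        rw [hftc, edist_comm, edist_eq_enorm_sub]
    _ ≤ ∫⁻ t in Ioc a b, ‖g' t‖ₑ := enorm_integral_le_lintegral_enorm _
    _ ≤ (∫⁻ t in Ioc a b, ‖g' t‖ₑ ^ 2) ^ (1 / 2 : ℝ) * volume (Ioc a b) ^ (1 / 2 : ℝ) := by
        simpa only [Measure.restrict_apply_univ] using
          lintegral_le_sqrt_lintegral_sq_mul _ hint.1.aestronglyMeasurable.enorm
    _ ≤ C * edist a b ^ ((1 / 2 : ℝ≥0) : ℝ) := by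
        gcongr
        · calc (∫⁻ t in Ioc a b, ‖g' t‖ₑ ^ 2) ^ (1 / 2 : ℝ) ≤ ((C : ℝ≥0∞) ^ 2) ^ (1 / 2 : ℝ) :=
                ENNReal.rpow_le_rpow ((lintegral_mono_set hsub').trans hC) (by positivity)
            _ = C := by rw [← ENNReal.rpow_natCast, ← ENNReal.rpow_mul]; simp
        · rw [Real.volume_Ioc, edist_comm, edist_dist, Real.dist_eq,
            abs_of_nonneg (sub_nonneg.2 hab)]
          simp

lemma continuous_vertical (s : ℝ) : Continuous fun t : ℝ => (⟨s, t⟩ : ℂ) := by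
  simp only [Complex.mk_eq_add_mul_I]
  fun_prop

lemma hasDerivAt_comp_vertical {f : ℂ → ℂ} {s t : ℝ} (hf : DifferentiableAt ℂ f ⟨s, t⟩) :
    HasDerivAt (fun t : ℝ => f ⟨s, t⟩) (deriv f ⟨s, t⟩ * Complex.I) t := by
  have hline : HasDerivAt (fun t : ℝ => (⟨s, t⟩ : ℂ)) Complex.I t := by
    simpa [Complex.mk_eq_add_mul_I] using
      ((Complex.ofRealCLM.hasDerivAt (x := t)).mul_const Complex.I).const_add (s : ℂ)
  exact hf.hasDerivAt.comp t hline

/-- The horizontal strip `ℝ × (α, β)`, a model of the disc in which the prime end under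
consideration is moved to `-∞`. -/
def horizontalStrip (α β : ℝ) : Set ℂ :=
  Complex.im ⁻¹' Ioo α β

lemma isOpen_horizontalStrip {α β : ℝ} : IsOpen (horizontalStrip α β) :=
  isOpen_Ioo.preimage Complex.continuous_im

lemma holderOnWith_vertical {f : ℂ → ℂ} {α β s : ℝ}
    (hf : DifferentiableOn ℂ f (horizontalStrip α β)) {C : ℝ≥0}
    (hC : ∫⁻ t in Ioo α β, ‖deriv f ⟨s, t⟩‖ₑ ^ 2 ≤ C ^ 2) :
    HolderOnWith C (1 / 2) (fun t => f ⟨s, t⟩) (Ioo α β) := by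
  have hf_deriv : ∀ t ∈ Ioo α β,
      HasDerivAt (fun t : ℝ => f ⟨s, t⟩) (deriv f ⟨s, t⟩ * Complex.I) t := fun t ht =>
    hasDerivAt_comp_vertical (hf.differentiableAt (isOpen_horizontalStrip.mem_nhds ht))
  have hderiv_cont : ContinuousOn (fun t : ℝ => deriv f ⟨s, t⟩) (Ioo α β) :=
    (hf.deriv isOpen_horizontalStrip).continuousOn.comp (continuous_vertical s).continuousOn
      fun t ht => ht
  refine holderOnWith_of_setLIntegral_enorm_deriv_sq_le ordConnected_Ioo hf_deriv
    (hderiv_cont.mul continuousOn_const) ?_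
  simpa only [enorm_mul, enorm_eq_nnnorm Complex.I, Complex.nnnorm_I, ENNReal.coe_one,
    mul_one] using hC

theorem exists_short_crosscut {f : ℂ → ℂ} {α β : ℝ} (hαβ : α < β)
    (hf : DifferentiableOn ℂ f (horizontalStrip α β))
    (harea : ∫⁻ u in horizontalStrip α β, ‖deriv f u‖ₑ ^ 2 ≠ ∞) {ε : ℝ} (hε : 0 < ε) (M : ℝ) :
    ∃ s < M, ∃ k : ℝ → ℂ, ContinuousOn k (Icc α β) ∧ EqOn k (fun t => f ⟨s, t⟩) (Ioo α β) ∧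
      ∀ ⦃t⦄, t ∈ Icc α β → ∀ ⦃t'⦄, t' ∈ Icc α β → dist (k t) (k t') ≤ ε := by
  let d : ℝ≥0 := (β - α).toNNReal ^ (1 / 2 : ℝ)
  have hd : 0 < d := NNReal.rpow_pos (Real.toNNReal_pos.2 (sub_pos.2 hαβ))
  let C : ℝ≥0 := ε.toNNReal / d
  have hC : (C : ℝ≥0∞) ^ 2 ≠ 0 := by simp [C, hε, hd.ne']
  obtain ⟨s, hsM, hs⟩ := exists_lt_setLIntegral_slice_lt
    ((measurable_deriv f).enorm.pow_const 2) measurableSet_Ioo harea hC M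
  have hholder : HolderOnWith C (1 / 2) (fun t => f ⟨s, t⟩) (Ioo α β) :=
    holderOnWith_vertical hf hs.le
  have hclosure : closure (Ioo α β) = Icc α β := closure_Ioo hαβ.ne
  obtain ⟨k, hk, hkf, hk_image⟩ := exists_continuousOn_closure_eqOn (hclosure ▸ isCompact_Icc)
    (hholder.continuousOn (by simp))
    (exists_tendsto_of_uniformContinuousOn (hholder.uniformContinuousOn (by simp)))
  rw [hclosure] at hk hk_image
  refine ⟨s, hsM, k, hk, hkf, fun t ht t' ht' => (edist_le_ofReal hε.le).1 ?_⟩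
  calc edist (k t) (k t') ≤ ediam (k '' Icc α β) :=
        edist_le_ediam_of_mem (mem_image_of_mem k ht) (mem_image_of_mem k ht')
    _ = ediam ((fun t => f ⟨s, t⟩) '' Ioo α β) := by rw [hk_image, ediam_closure]
    _ ≤ C * ENNReal.ofReal (β - α) ^ ((1 / 2 : ℝ≥0) : ℝ) :=
        hholder.ediam_image_le_of_le (Real.ediam_Ioo α β).le
    _ = (C * d : ℝ≥0) := by simp [d, ENNReal.ofReal, ENNReal.coe_rpow_of_nonneg]
    _ = ENNReal.ofReal ε := by rw [div_mul_cancel₀ _ hd.ne', ENNReal.ofReal]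

/-! ### Images of half-strips -/

section Strip

variable {f : ℂ → ℂ} {α β : ℝ}

lemma isPreconnected_horizontalStrip : IsPreconnected (horizontalStrip α β) :=
  ((convex_Ioo α β).linear_preimage Complex.imLm).isPreconnected

lemma isOpen_image_of_subset_horizontalStrip (hαβ : α < β)
    (hf : DifferentiableOn ℂ f (horizontalStrip α β)) (hinj : InjOn f (horizontalStrip α β)) :
    ∀ U ⊆ horizontalStrip α β, IsOpen U → IsOpen (f '' U) := by
  obtain ⟨t, ht⟩ := nonempty_Ioo.2 hαβ
  have hnt : (horizontalStrip α β).Nontrivial :=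
    ⟨⟨0, t⟩, ht, ⟨1, t⟩, ht, fun h => zero_ne_one (congrArg Complex.re h)⟩
  exact isOpen_image_of_differentiableOn_of_injOn hf isOpen_horizontalStrip
    isPreconnected_horizontalStrip hnt hinj

lemma frontier_image_halfStrip_subset
    (hopen : ∀ U ⊆ horizontalStrip α β, IsOpen U → IsOpen (f '' U))
    (hinj : InjOn f (horizontalStrip α β)) (s : ℝ) :
    frontier (f '' (horizontalStrip α β ∩ {u | u.re < s})) ⊆
      frontier (f '' horizontalStrip α β) ∪ (fun t => f ⟨s, t⟩) '' Ioo α β := by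
  refine (frontier_image_inter_subset isOpen_horizontalStrip hopen hinj
    (isOpen_lt Complex.continuous_re continuous_const)).trans (union_subset_union_right _ ?_)
  rw [Complex.frontier_setOfPred_re_lt]
  rintro _ ⟨u, ⟨hu, rfl⟩, rfl⟩
  exact ⟨u.im, hu, rfl⟩

lemma mem_frontier_image_of_crosscut_end
    (hopen : ∀ U ⊆ horizontalStrip α β, IsOpen U → IsOpen (f '' U))
    (hinj : InjOn f (horizontalStrip α β)) {k : ℝ → ℂ} {s t : ℝ} (hαβ : α < β)
    (hk : ContinuousOn k (Icc α β)) (hkf : EqOn k (fun t => f ⟨s, t⟩) (Ioo α β))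
    (ht : t ∈ Icc α β) (ht' : t ∉ Ioo α β) : k t ∈ frontier (f '' horizontalStrip α β) := by
  have : (𝓝[Ioo α β] t).NeBot :=
    mem_closure_iff_nhdsWithin_neBot.1 (closure_Ioo hαβ.ne ▸ ht)
  have hlim : Tendsto (fun t => f ⟨s, t⟩) (𝓝[Ioo α β] t) (𝓝 (k t)) :=
    ((hk t ht).mono Ioo_subset_Icc_self).tendsto.congr' (hkf.eventuallyEq_nhdsWithin)
  exact mem_frontier_image_of_tendsto (l := map (fun t => (⟨s, t⟩ : ℂ)) (𝓝[Ioo α β] t))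
    isOpen_horizontalStrip hopen hinj
    (le_principal_iff.2 (eventually_mem_nhdsWithin.mono fun t ht => ht))
    (((continuous_vertical s).tendsto t).mono_left inf_le_left) ht' hlim

lemma image_halfStrip_subset_closedBall
    (hopen : ∀ U ⊆ horizontalStrip α β, IsOpen U → IsOpen (f '' U))
    (hinj : InjOn f (horizontalStrip α β)) (hbdd : Bornology.IsBounded (f '' horizontalStrip α β))
    (hc : IsPreconnected (f '' horizontalStrip α β)) {k : ℝ → ℂ} {s : ℝ} (hαβ : α < β)
    (hk : ContinuousOn k (Icc α β)) (hkf : EqOn k (fun t => f ⟨s, t⟩) (Ioo α β)) {L : Set ℂ}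
    (hL : IsClosed L) (hLc : IsPreconnected L) (hLD : L ⊆ frontier (f '' horizontalStrip α β))
    (hkα : k α ∈ L) (hkβ : k β ∈ L) {c : ℂ} {r : ℝ} (hkr : k '' Icc α β ⊆ closedBall c r)
    (hLr : L ⊆ closedBall c r) {p : ℂ} (hp : p ∈ horizontalStrip α β) (hsp : s ≤ p.re)
    (hpr : f p ∉ closedBall c r) :
    f '' (horizontalStrip α β ∩ {u | u.re < s}) ⊆ closedBall c r := by
  have hD : IsOpen (f '' horizontalStrip α β) := hopen _ subset_rfl isOpen_horizontalStrip
  have hWD : f '' (horizontalStrip α β ∩ {u | u.re < s}) ⊆ f '' horizontalStrip α β :=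
    image_mono inter_subset_left
  have hcut : (fun t => f ⟨s, t⟩) '' Ioo α β ⊆ k '' Icc α β :=
    hkf.image_eq ▸ image_mono Ioo_subset_Icc_self
  have hends : frontier (f '' horizontalStrip α β) ∩ k '' Icc α β ⊆ L := by
    rintro _ ⟨hfrontier, t, ht, rfl⟩
    rcases eq_endpoints_or_mem_Ioo_of_mem_Icc ht with rfl | rfl | ht
    · exact hkα
    · exact hkβ
    · rw [hkf ht] at hfrontier
      exact absurd (mem_image_of_mem f ht)
        ((disjoint_frontier_iff_isOpen.2 hD).notMem_of_mem_left hfrontier)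
  refine subset_closedBall_of_frontier_subset_union hD hc hWD (hbdd.subset hWD)
    ((frontier_image_halfStrip_subset hopen hinj s).trans (union_subset_union_right _ hcut))
    (isCompact_Icc.image_of_continuousOn hk).isClosed hL hLc hLD hends hkr hLr
    (mem_image_of_mem f hp) ?_ hpr
  rintro ⟨u, ⟨hu, hus⟩, hup⟩
  exact hsp.not_gt (hinj hu hp hup ▸ hus)

lemma exists_forall_mem_frontier_notMem_closedBall {X : Type*} [PseudoMetricSpace X] {D : Set X}
    (hD : IsOpen D) {p : X} (hp : p ∈ D) : ∃ r > 0, ∀ c ∈ frontier D, p ∉ closedBall c r := by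
  obtain ⟨r, hr, hrD⟩ := Metric.nhds_basis_closedBall.mem_iff.1 (hD.mem_nhds hp)
  exact ⟨r, hr, fun c hc hpc => (disjoint_frontier_iff_isOpen.2 hD).notMem_of_mem_left hc
    (hrD (mem_closedBall_comm.1 hpc))⟩

theorem exists_image_halfStrip_subset_closedBall (hαβ : α < β)
    (hf : DifferentiableOn ℂ f (horizontalStrip α β)) (hinj : InjOn f (horizontalStrip α β))
    (hbdd : Bornology.IsBounded (f '' horizontalStrip α β))
    [LocallyConnectedSpace (frontier (f '' horizontalStrip α β))] {ε : ℝ} (hε : 0 < ε) :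
    ∃ s c, f '' (horizontalStrip α β ∩ {u | u.re < s}) ⊆ closedBall c ε := by
  have hopen := isOpen_image_of_subset_horizontalStrip hαβ hf hinj
  have hD : IsOpen (f '' horizontalStrip α β) := hopen _ subset_rfl isOpen_horizontalStrip
  obtain ⟨t₀, ht₀⟩ := nonempty_Ioo.2 hαβ
  have hp : ⟨0, t₀⟩ ∈ horizontalStrip α β := ht₀
  obtain ⟨r, hr, hfar⟩ :=
    exists_forall_mem_frontier_notMem_closedBall hD (mem_image_of_mem f hp)
  let e := min ε r
  have he : 0 < e := lt_min hε hr
  have hfar_e : ∀ c ∈ frontier (f '' horizontalStrip α β), f ⟨0, t₀⟩ ∉ closedBall c e :=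
    fun c hc hpc => hfar c hc (closedBall_subset_closedBall (min_le_right ε r) hpc)
  have hcompact : IsCompact (frontier (f '' horizontalStrip α β)) :=
    hbdd.isCompact_closure.of_isClosed_subset isClosed_frontier frontier_subset_closure
  obtain ⟨δ, hδ, hjoin⟩ := exists_isPreconnected_subset_of_isCompact hcompact he
  have harea : ∫⁻ u in horizontalStrip α β, ‖deriv f u‖ₑ ^ 2 ≠ ∞ := by
    rw [setLIntegral_enorm_deriv_sq_eq_volume_image isOpen_horizontalStrip hf hinj]
    exact hbdd.measure_lt_top.ne
  obtain ⟨s, hs, k, hk, hkf, hk_diam⟩ :=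
    exists_short_crosscut hαβ hf harea (lt_min he (half_pos hδ)) 0
  have hα : α ∈ Icc α β := left_mem_Icc.2 hαβ.le
  have hβ : β ∈ Icc α β := right_mem_Icc.2 hαβ.le
  have hkα := mem_frontier_image_of_crosscut_end hopen hinj hαβ hk hkf hα (by simp)
  have hkβ := mem_frontier_image_of_crosscut_end hopen hinj hαβ hk hkf hβ (by simp)
  obtain ⟨L, hLD, hL, hLc, hαL, hβL, hLe⟩ := hjoin _ hkα _ hkβ
    ((hk_diam hα hβ).trans_lt ((min_le_right _ _).trans_lt (half_lt_self hδ)))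
  have hke : k '' Icc α β ⊆ closedBall (k α) e := image_subset_iff.2 fun t ht =>
    mem_closedBall.2 ((hk_diam ht hα).trans (min_le_left _ _))
  exact ⟨s, k α, (image_halfStrip_subset_closedBall hopen hinj hbdd
    (isPreconnected_horizontalStrip.image f hf.continuousOn) hαβ hk hkf hL hLc hLD hαL hβL hke hLe
    hp hs.le (hfar_e _ hkα)).trans (closedBall_subset_closedBall (min_le_left ε r))⟩

end Strip

/-! ### From the strip to the disc -/

/-- The involution `w ↦ (1 - w) / (1 + w)`, which exchanges the right half-plane with the unit
disc and `0` with `1`. -/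
noncomputable def cayley (w : ℂ) : ℂ :=
  (1 - w) / (1 + w)

lemma cayley_cayley {w : ℂ} (hw : 1 + w ≠ 0) : cayley (cayley w) = w := by
  unfold cayley
  field_simp
  ring

lemma one_add_ne_zero_of_re_pos {w : ℂ} (hw : 0 < w.re) : 1 + w ≠ 0 := fun h => by
  have := congrArg Complex.re h
  simp only [Complex.add_re, Complex.one_re, Complex.zero_re] at this
  linarith

lemma one_add_ne_zero_of_norm_lt_one {z : ℂ} (hz : ‖z‖ < 1) : 1 + z ≠ 0 := fun h => by
  rw [eq_neg_of_add_eq_zero_right h, norm_neg, norm_one] at hz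
  exact hz.false

lemma norm_cayley_lt_one {w : ℂ} (hw : 0 < w.re) : ‖cayley w‖ < 1 := by
  rw [cayley, norm_div, div_lt_one (norm_pos_iff.2 (one_add_ne_zero_of_re_pos hw)),
    ← sq_lt_sq₀ (norm_nonneg _) (norm_nonneg _), ← Complex.normSq_eq_norm_sq,
    ← Complex.normSq_eq_norm_sq, Complex.normSq_sub, Complex.normSq_add]
  simp only [map_one, one_mul, Complex.conj_re]
  linarith

lemma re_cayley_pos {z : ℂ} (hz : ‖z‖ < 1) : 0 < (cayley z).re := by
  have hz' : Complex.normSq z < 1 := by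
    rw [Complex.normSq_eq_norm_sq]
    exact pow_lt_one₀ (norm_nonneg z) hz two_ne_zero
  rw [cayley, Complex.div_re, ← add_div]
  refine div_pos ?_ (Complex.normSq_pos.2 (one_add_ne_zero_of_norm_lt_one hz))
  rw [Complex.normSq_apply] at hz'
  simp only [Complex.sub_re, Complex.one_re, Complex.add_re, Complex.sub_im, Complex.one_im,
    Complex.add_im]
  linarith

lemma bijOn_cayley : BijOn cayley {w | 0 < w.re} (ball 0 1) :=
  InvOn.bijOn (f' := cayley)
    ⟨fun _ hw => cayley_cayley (one_add_ne_zero_of_re_pos hw),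
      fun _ hz => cayley_cayley (one_add_ne_zero_of_norm_lt_one (mem_ball_zero_iff.1 hz))⟩
    (fun _ hw => mem_ball_zero_iff.2 (norm_cayley_lt_one hw))
    (fun _ hz => re_cayley_pos (mem_ball_zero_iff.1 hz))

lemma bijOn_exp_horizontalStrip :
    BijOn Complex.exp (horizontalStrip (-(Real.pi / 2)) (Real.pi / 2)) {w | 0 < w.re} := by
  refine InvOn.bijOn (f' := Complex.log) ⟨fun u hu => ?_, fun w hw => ?_⟩ (fun u hu => ?_)
    (fun w hw => ?_)
  · exact Complex.log_exp (by linarith [hu.1, Real.pi_pos]) (by linarith [hu.2, Real.pi_pos])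
  · exact Complex.exp_log (Complex.ne_zero_of_re_pos hw)
  · rw [mem_ofPred_eq, Complex.exp_re]
    exact mul_pos (Real.exp_pos _) (Real.cos_pos_of_mem_Ioo hu)
  · exact abs_lt.1 (Complex.log_im w ▸ Complex.abs_arg_lt_pi_div_two_iff.2 (.inl hw))

/-- A conformal map from the strip `|im u| < π / 2` onto the unit disc that sends the end
`re u → -∞` to the boundary point `ζ`. -/
noncomputable def stripToDisc (ζ u : ℂ) : ℂ :=
  ζ * cayley (Complex.exp u)

section StripToDisc

variable {ζ : ℂ}

lemma bijOn_mul_left_ball (hζ : ‖ζ‖ = 1) : BijOn (ζ * ·) (ball 0 1) (ball 0 1) := by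
  have hζ₀ : ζ ≠ 0 := norm_ne_zero_iff.1 (hζ ▸ one_ne_zero)
  refine InvOn.bijOn (f' := (ζ⁻¹ * ·))
    ⟨fun z _ => inv_mul_cancel_left₀ hζ₀ z, fun z _ => mul_inv_cancel_left₀ hζ₀ z⟩ ?_ ?_ <;>
  · intro z hz
    simpa [hζ] using hz

lemma bijOn_stripToDisc (hζ : ‖ζ‖ = 1) :
    BijOn (stripToDisc ζ) (horizontalStrip (-(Real.pi / 2)) (Real.pi / 2)) (ball 0 1) :=
  (bijOn_mul_left_ball hζ).comp (bijOn_cayley.comp bijOn_exp_horizontalStrip)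

lemma differentiableOn_stripToDisc :
    DifferentiableOn ℂ (stripToDisc ζ) (horizontalStrip (-(Real.pi / 2)) (Real.pi / 2)) := by
  have hne : ∀ u ∈ horizontalStrip (-(Real.pi / 2)) (Real.pi / 2), 1 + Complex.exp u ≠ 0 :=
    fun u hu => one_add_ne_zero_of_re_pos (bijOn_exp_horizontalStrip.mapsTo hu)
  exact .const_mul (.div (by fun_prop) (by fun_prop) hne) ζ

lemma norm_cayley_stripToDisc_div {u : ℂ} (hζ : ‖ζ‖ = 1)
    (hu : u ∈ horizontalStrip (-(Real.pi / 2)) (Real.pi / 2)) :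
    ‖cayley (stripToDisc ζ u / ζ)‖ = Real.exp u.re := by
  have hζ₀ : ζ ≠ 0 := norm_ne_zero_iff.1 (hζ ▸ one_ne_zero)
  rw [stripToDisc, mul_div_cancel_left₀ _ hζ₀,
    cayley_cayley (one_add_ne_zero_of_re_pos (bijOn_exp_horizontalStrip.mapsTo hu)),
    Complex.norm_exp]

lemma image_stripToDisc_halfStrip_mem_nhdsWithin (hζ : ‖ζ‖ = 1) (s : ℝ) :
    stripToDisc ζ '' (horizontalStrip (-(Real.pi / 2)) (Real.pi / 2) ∩ {u | u.re < s}) ∈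
      𝓝[ball 0 1] ζ := by
  have hζ₀ : ζ ≠ 0 := norm_ne_zero_iff.1 (hζ ▸ one_ne_zero)
  have hcont : ContinuousAt (fun z => ‖cayley (z / ζ)‖) ζ :=
    .norm (.div (by fun_prop) (by fun_prop) (by simp [hζ₀, one_add_one_eq_two]))
  have hsmall : ∀ᶠ z in 𝓝[ball 0 1] ζ, ‖cayley (z / ζ)‖ < Real.exp s :=
    nhdsWithin_le_nhds (hcont.eventually_lt_const (by simp [cayley, hζ₀, Real.exp_pos]))
  filter_upwards [hsmall, self_mem_nhdsWithin] with z hz hz_mem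
  obtain ⟨u, hu, rfl⟩ := (bijOn_stripToDisc hζ).surjOn hz_mem
  rw [norm_cayley_stripToDisc_div hζ hu] at hz
  exact mem_image_of_mem _ ⟨hu, Real.exp_lt_exp.1 hz⟩

end StripToDisc

lemma exists_tendsto_of_forall_eventually_mem_closedBall {X Y : Type*} [PseudoMetricSpace Y]
    [CompleteSpace Y] {f : X → Y} {l : Filter X} [l.NeBot]
    (h : ∀ ε > 0, ∃ c, ∀ᶠ x in l, f x ∈ closedBall c ε) : ∃ y, Tendsto f l (𝓝 y) := by
  refine cauchy_map_iff_exists_tendsto.1 (Metric.cauchy_iff.2 ⟨inferInstance, fun ε hε => ?_⟩)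
  obtain ⟨c, hc⟩ := h (ε / 3) (by positivity)
  refine ⟨closedBall c (ε / 3), hc, fun x hx y hy => ?_⟩
  calc dist x y ≤ dist x c + dist y c := dist_triangle_right x y c
    _ ≤ ε / 3 + ε / 3 := add_le_add hx hy
    _ < ε := by linarith

theorem exists_tendsto_of_mem_sphere {φ : ℂ → ℂ} (hφ : DifferentiableOn ℂ φ (ball 0 1))
    (hinj : InjOn φ (ball 0 1)) (hbdd : Bornology.IsBounded (φ '' ball 0 1))
    [hlc : LocallyConnectedSpace (frontier (φ '' ball 0 1))] {ζ : ℂ} (hζ : ζ ∈ sphere 0 1) :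
    ∃ y, Tendsto φ (𝓝[ball 0 1] ζ) (𝓝 y) := by
  have hnorm : ‖ζ‖ = 1 := mem_sphere_zero_iff_norm.1 hζ
  have : (𝓝[ball 0 1] ζ).NeBot := mem_closure_iff_nhdsWithin_neBot.1
    (closure_ball (0 : ℂ) one_ne_zero ▸ sphere_subset_closedBall hζ)
  have hbij := bijOn_stripToDisc hnorm
  have himage : (φ ∘ stripToDisc ζ) '' horizontalStrip (-(Real.pi / 2)) (Real.pi / 2) =
      φ '' ball 0 1 := by rw [image_comp, hbij.image_eq]
  rw [← himage] at hbdd hlc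
  refine exists_tendsto_of_forall_eventually_mem_closedBall fun ε hε => ?_
  obtain ⟨s, c, hsc⟩ := exists_image_halfStrip_subset_closedBall (by linarith [Real.pi_pos])
    (hφ.comp differentiableOn_stripToDisc hbij.mapsTo) (hinj.comp hbij.injOn hbij.mapsTo) hbdd hε
  rw [image_comp, image_subset_iff] at hsc
  exact ⟨c, mem_of_superset (image_stripToDisc_halfStrip_mem_nhdsWithin hnorm s) hsc⟩

theorem caratheodory_continuous_extension
    (D : Set ℂ) (hD : IsOpen D) (hDc : IsConnected D)
    (hbd : Bornology.IsBounded D) [SimplyConnectedSpace D]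
    (φ : ℂ → ℂ) (hφ : DifferentiableOn ℂ φ (ball (0:ℂ) 1))
    (hbij : Set.BijOn φ (ball (0:ℂ) 1) D)
    (hlc : LocallyConnectedSpace (frontier D)) :
    ∃ ψ : ℂ → ℂ, ContinuousOn ψ (closedBall (0:ℂ) 1) ∧
      (∀ z ∈ ball (0:ℂ) 1, ψ z = φ z) ∧
      ψ '' closedBall (0:ℂ) 1 = closure D := by
  obtain rfl := hbij.image_eq
  have hclosure : closure (ball (0 : ℂ) 1) = closedBall 0 1 := closure_ball 0 one_ne_zero
  have hlim : ∀ z ∈ closure (ball (0 : ℂ) 1), ∃ y, Tendsto φ (𝓝[ball 0 1] z) (𝓝 y) := by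
    rw [hclosure, ← ball_union_sphere]
    rintro z (hz | hz)
    · exact ⟨φ z, hφ.continuousOn z hz⟩
    · exact exists_tendsto_of_mem_sphere hφ hbij.injOn hbd hz
  rw [← hclosure]
  exact exists_continuousOn_closure_eqOn (hclosure ▸ isCompact_closedBall 0 1) hφ.continuousOn hlim
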